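/- arXiv:1311.5494 — 3 statements merged into one kernel-verified Lean document; each statement's English description precedes it below -/
import Mathlib

section
/- Let R be a commutative ring, G a Lie algebra over R, and H a characteristic Lie ideal of G. Then there exists a homomorphism of Lie algebras σ : Der(G) → Der(G ⧸ H) from the Lie algebra of derivations of G to the Lie algebra of derivations of the quotient G ⧸ H such that σ(D)(π(x)) = π(D(x)) for every derivation D of G and every x ∈ G, where π : G → G ⧸ H is the quotient map. (The paper's proposition on the induced morphism between split extension classifiers, instantiated in Lie algebras.) -/
/-- A characteristic Lie ideal `H` of `G` induces a morphism of Lie algebras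
`Der(G) → Der(G ⧸ H)`. -/
theorem actor_quotient_characteristic
    (R : Type*) [CommRing R] (G : Type*) [LieRing G] [LieAlgebra R G]
    (H : LieIdeal R G)
    (hH : ∀ D : LieDerivation R G G, ∀ h ∈ H, D h ∈ H) :
    ∃ σ : LieDerivation R G G →ₗ⁅R⁆ LieDerivation R (G ⧸ H) (G ⧸ H),
      ∀ D : LieDerivation R G G, ∀ x : G,
        (σ D) (LieSubmodule.Quotient.mk (N := H) x) =
          LieSubmodule.Quotient.mk (N := H) (D x) := by
  have hs : ∀ y : G ⧸ H, ∃ x : G, LieSubmodule.Quotient.mk (N := H) x = y :=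
    LieSubmodule.Quotient.surjective_mk' H
  have hadd : ∀ x y : G, LieSubmodule.Quotient.mk (N := H) (x + y) =
      LieSubmodule.Quotient.mk x + LieSubmodule.Quotient.mk y := fun _ _ => rfl
  have hsub : ∀ x y : G, LieSubmodule.Quotient.mk (N := H) (x - y) =
      LieSubmodule.Quotient.mk x - LieSubmodule.Quotient.mk y := fun _ _ => rfl
  have hsmul : ∀ (r : R) (x : G), LieSubmodule.Quotient.mk (N := H) (r • x) =
      r • LieSubmodule.Quotient.mk x := fun _ _ => rfl
  have key : ∀ D : LieDerivation R G G, ∃ E : LieDerivation R (G ⧸ H) (G ⧸ H),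
      ∀ x : G, E (LieSubmodule.Quotient.mk (N := H) x) =
        LieSubmodule.Quotient.mk (N := H) (D x) := by
    intro D
    let f : (G ⧸ H) →ₗ[R] (G ⧸ H) :=
      Submodule.mapQ H.toSubmodule H.toSubmodule (D : G →ₗ[R] G) (fun h hh => hH D h hh)
    have hf : ∀ x : G, f (LieSubmodule.Quotient.mk (N := H) x) =
        LieSubmodule.Quotient.mk (N := H) (D x) := fun _ => rfl
    refine ⟨⟨f, ?_⟩, hf⟩
    intro a b
    obtain ⟨x, rfl⟩ := hs a
    obtain ⟨y, rfl⟩ := hs b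
    rw [← LieSubmodule.Quotient.mk_bracket, hf, hf, hf, D.apply_lie_eq_sub, hsub,
      LieSubmodule.Quotient.mk_bracket, LieSubmodule.Quotient.mk_bracket]
  choose σ hσ using key
  refine ⟨{ toFun := σ, map_add' := ?_, map_smul' := ?_, map_lie' := ?_ }, hσ⟩
  · intro D E
    ext a
    obtain ⟨x, rfl⟩ := hs a
    rw [LieDerivation.add_apply, hσ, hσ, hσ, LieDerivation.add_apply, hadd]
  · intro r D
    ext a
    obtain ⟨x, rfl⟩ := hs a
    rw [RingHom.id_apply, LieDerivation.smul_apply, hσ, hσ, LieDerivation.smul_apply, hsmul]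
  · intro D E
    ext a
    obtain ⟨x, rfl⟩ := hs a
    change σ ⁅D, E⁆ _ = ⁅σ D, σ E⁆ _
    rw [LieDerivation.commutator_apply, hσ, hσ, hσ, hσ, hσ, LieDerivation.commutator_apply, hsub]
end

section
/- Equip X = ℤ × ℤ × ℤ, with componentwise addition, with the multiplication (a,α,β)·(b,γ,δ) = (0, aδ + bβ + αγ, aγ + bα). Then: (1) X is a non-unital non-associative ring (multiplication is left and right distributive over addition); (2) the additive subgroup G = { (a,α,β) ∈ X | a = 0 } is a two-sided ideal of X; (3) the additive subgroup I = { (a,α,β) ∈ X | a = 0 and β = 0 } equals the additive subgroup of X generated by all products g·g' with g, g' ∈ G (the derived subobject [G,G] of the non-unital non-associative ring G), and I is a two-sided ideal of G; (4) I is not a two-sided ideal of X: for x = (1,0,0) and i = (0,1,0) ∈ I one has x·i = (0,0,1) ∉ I. Hence in the semi-abelian category of non-unital non-associative rings the derived subobject [G,G] need not be characteristic in G. -/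
/-- The multiplication `(a,α,β)·(b,γ,δ) = (0, aδ + bβ + αγ, aγ + bα)` on `ℤ × ℤ × ℤ`. -/
def mulX (x y : ℤ × ℤ × ℤ) : ℤ × ℤ × ℤ :=
  (0, x.1 * y.2.2 + y.1 * x.2.2 + x.2.1 * y.2.1, x.1 * y.2.1 + y.1 * x.2.1)

/-- The additive subgroup `G = { (a,α,β) | a = 0 }` of `X = ℤ × ℤ × ℤ`. -/
def Gsub : AddSubgroup (ℤ × ℤ × ℤ) where
  carrier := {p | p.1 = 0}
  zero_mem' := rfl
  add_mem' := by
    intro a b ha hb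
    simp only [Set.mem_setOf_eq, Prod.fst_add] at *
    omega
  neg_mem' := by
    intro a ha
    simp only [Set.mem_setOf_eq, Prod.fst_neg] at *
    omega

/-- The additive subgroup `I = { (a,α,β) | a = 0 ∧ β = 0 }` of `X = ℤ × ℤ × ℤ`. -/
def Isub : AddSubgroup (ℤ × ℤ × ℤ) where
  carrier := {p | p.1 = 0 ∧ p.2.2 = 0}
  zero_mem' := ⟨rfl, rfl⟩
  add_mem' := by
    intro a b ha hb
    simp only [Set.mem_setOf_eq, Prod.fst_add, Prod.snd_add] at *
    omega
  neg_mem' := by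
    intro a ha
    simp only [Set.mem_setOf_eq, Prod.fst_neg, Prod.snd_neg] at *
    omega

/-- The derived subobject `[G,G]` of the non-unital non-associative ring `G` inside
`X = ℤ ⋉ G` is an ideal of `G` but not an ideal of `X`. -/
theorem derived_not_characteristic :
    -- (1) `mulX` is left and right distributive, so `X` is a non-unital non-assoc. ring
    (∀ x y z : ℤ × ℤ × ℤ,
      mulX x (y + z) = mulX x y + mulX x z ∧ mulX (x + y) z = mulX x z + mulX y z) ∧
    -- (2) `G` is a two-sided ideal of `X`
    (∀ x : ℤ × ℤ × ℤ, ∀ g ∈ Gsub, mulX x g ∈ Gsub ∧ mulX g x ∈ Gsub) ∧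
    -- (3) `I` is the additive subgroup generated by products of elements of `G`,
    --     and `I` is a two-sided ideal of `G`
    (Isub = AddSubgroup.closure {p | ∃ g ∈ Gsub, ∃ g' ∈ Gsub, p = mulX g g'} ∧
      (Isub : Set (ℤ × ℤ × ℤ)) ⊆ Gsub ∧
      (∀ g ∈ Gsub, ∀ i ∈ Isub, mulX g i ∈ Isub ∧ mulX i g ∈ Isub)) ∧
    -- (4) `I` is not a two-sided ideal of `X`
    (mulX ((1 : ℤ), (0 : ℤ), (0 : ℤ)) ((0 : ℤ), (1 : ℤ), (0 : ℤ)) =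
        ((0 : ℤ), (0 : ℤ), (1 : ℤ)) ∧
      ((0 : ℤ), (1 : ℤ), (0 : ℤ)) ∈ Isub ∧
      ((0 : ℤ), (0 : ℤ), (1 : ℤ)) ∉ Isub ∧
      ¬ (∀ x : ℤ × ℤ × ℤ, ∀ i ∈ Isub, mulX x i ∈ Isub ∧ mulX i x ∈ Isub)) := by
  have hG : ∀ p : ℤ × ℤ × ℤ, p ∈ Gsub ↔ p.1 = 0 := fun p => Iff.rfl
  have hI : ∀ p : ℤ × ℤ × ℤ, p ∈ Isub ↔ p.1 = 0 ∧ p.2.2 = 0 := fun p => Iff.rfl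
  refine ⟨?_, ?_, ⟨?_, ?_, ?_⟩, ?_, ?_, ?_, ?_⟩
  · rintro ⟨a, b, c⟩ ⟨d, e, f⟩ ⟨g, h, i⟩
    constructor
    · simp only [mulX, Prod.mk_add_mk, Prod.mk.injEq]
      refine ⟨by ring, by ring, by ring⟩
    · simp only [mulX, Prod.mk_add_mk, Prod.mk.injEq]
      refine ⟨by ring, by ring, by ring⟩
  · intro x g _
    exact ⟨rfl, rfl⟩
  · apply le_antisymm
    · rintro ⟨a, b, c⟩ h
      obtain ⟨h1, h2⟩ := (hI _).1 h
      simp only at h1 h2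
      subst h1 h2
      apply AddSubgroup.subset_closure
      exact ⟨(0, b, 0), rfl, (0, 1, 0), rfl, by simp [mulX]⟩
    · rw [AddSubgroup.closure_le]
      rintro p ⟨g, hg, g', hg', rfl⟩
      rw [hG] at hg hg'
      exact (hI _).2 ⟨rfl, by simp [mulX, hg, hg']⟩
  · intro p hp
    exact ((hI p).1 hp).1
  · intro g hg i hi
    rw [hG] at hg
    rw [hI] at hi
    exact ⟨(hI _).2 ⟨rfl, by simp [mulX, hg, hi.1]⟩, (hI _).2 ⟨rfl, by simp [mulX, hg, hi.1]⟩⟩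
  · simp [mulX]
  · exact ⟨rfl, rfl⟩
  · simp [hI]
  · intro h
    have := (h (1, 0, 0) (0, 1, 0) ⟨rfl, rfl⟩).1
    simp [hI, mulX] at this
end

section
/- Equip X = ℤ × ℤ × ℤ, with componentwise addition, with the multiplication (a,α,β)·(b,γ,δ) = (0, aδ + bβ + αγ, aγ + bα), making X a non-unital non-associative ring, and let G = { (a,α,β) ∈ X | a = 0 }, a two-sided ideal of X. Then: (1) the additive subgroup Z = { (a,α,β) ∈ X | a = 0 and α = 0 } equals the annihilator of G in G, i.e. Z = { g ∈ G | g·g' = 0 and g'·g = 0 for all g' ∈ G } (the centre of G in the category of non-unital non-associative rings); (2) Z is a two-sided ideal of G; (3) Z is not a two-sided ideal of X: for x = (1,0,0) and z = (0,0,1) ∈ Z one has x·z = (0,1,0) ∉ Z. Hence in the semi-abelian category of non-unital non-associative rings the centre Z(G) need not be characteristic in G. -/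
/-- The additive subgroup `Z = { (a,α,β) | a = 0 ∧ α = 0 }` of `X = ℤ × ℤ × ℤ`. -/
def Zsub : AddSubgroup (ℤ × ℤ × ℤ) where
  carrier := {p | p.1 = 0 ∧ p.2.1 = 0}
  zero_mem' := ⟨rfl, rfl⟩
  add_mem' := by
    intro a b ha hb
    simp only [Set.mem_setOf_eq, Prod.fst_add, Prod.snd_add] at *
    omega
  neg_mem' := by
    intro a ha
    simp only [Set.mem_setOf_eq, Prod.fst_neg, Prod.snd_neg] at *
    omega

theorem mem_Gsub_iff (p : ℤ × ℤ × ℤ) : p ∈ Gsub ↔ p.1 = 0 := Iff.rfl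

theorem mem_Zsub_iff (p : ℤ × ℤ × ℤ) : p ∈ Zsub ↔ p.1 = 0 ∧ p.2.1 = 0 := Iff.rfl

/-- The centre `Z(G)` of the non-unital non-associative ring `G` inside `X = ℤ ⋉ G`
is an ideal of `G` but not an ideal of `X`. -/
theorem center_not_characteristic :
    -- the ambient structure: `mulX` is left and right distributive and `G` is an ideal of `X`
    (∀ x y z : ℤ × ℤ × ℤ,
      mulX x (y + z) = mulX x y + mulX x z ∧ mulX (x + y) z = mulX x z + mulX y z) ∧
    (∀ x : ℤ × ℤ × ℤ, ∀ g ∈ Gsub, mulX x g ∈ Gsub ∧ mulX g x ∈ Gsub) ∧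
    -- (1) `Z` is the two-sided annihilator (centre) of `G` in `G`
    ((Zsub : Set (ℤ × ℤ × ℤ)) =
      {g | g ∈ Gsub ∧ ∀ g' ∈ Gsub, mulX g g' = 0 ∧ mulX g' g = 0}) ∧
    -- (2) `Z` is a two-sided ideal of `G`
    (∀ g ∈ Gsub, ∀ z ∈ Zsub, mulX g z ∈ Zsub ∧ mulX z g ∈ Zsub) ∧
    -- (3) `Z` is not a two-sided ideal of `X`
    (mulX ((1 : ℤ), (0 : ℤ), (0 : ℤ)) ((0 : ℤ), (0 : ℤ), (1 : ℤ)) =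
        ((0 : ℤ), (1 : ℤ), (0 : ℤ)) ∧
      ((0 : ℤ), (0 : ℤ), (1 : ℤ)) ∈ Zsub ∧
      ((0 : ℤ), (1 : ℤ), (0 : ℤ)) ∉ Zsub ∧
      ¬ (∀ x : ℤ × ℤ × ℤ, ∀ z ∈ Zsub, mulX x z ∈ Zsub ∧ mulX z x ∈ Zsub)) := by
  refine ⟨?_, ?_, ?_, ?_, ?_, ?_, ?_, ?_⟩
  · rintro ⟨a, b, c⟩ ⟨d, e, f⟩ ⟨g, h, i⟩
    simp only [mulX, Prod.mk_add_mk, Prod.mk.injEq]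
    refine ⟨⟨?_, ?_, ?_⟩, ?_, ?_, ?_⟩ <;> ring
  · intro x g _
    exact ⟨rfl, rfl⟩
  · ext ⟨a, b, c⟩
    simp only [SetLike.mem_coe, Set.mem_setOf_eq, mem_Zsub_iff, mem_Gsub_iff]
    constructor
    · rintro ⟨rfl, rfl⟩
      refine ⟨rfl, ?_⟩
      rintro ⟨d, e, f⟩ hd
      simp only at hd
      subst hd
      simp [mulX]
    · rintro ⟨rfl, h⟩
      have h1 := (h (0, 1, 0) rfl).1
      simpa [mulX] using h1
  · rintro ⟨a, b, c⟩ hg ⟨d, e, f⟩ hz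
    simp only [mem_Zsub_iff, mem_Gsub_iff] at hg hz ⊢
    obtain ⟨rfl, rfl⟩ := hz
    subst hg
    simp [mulX]
  · simp [mulX]
  · simp [mem_Zsub_iff]
  · simp [mem_Zsub_iff]
  · intro h
    have h1 := (h (1, 0, 0) (0, 0, 1) ⟨rfl, rfl⟩).1
    simp [mulX, mem_Zsub_iff] at h1
end
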